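/- Let μ = N(m₁, s²I_d) and ν = N(m₂, r²I_d) be Gaussian measures on ℝ^d with isotropic covariances, s, r ≥ 0. Then SW_2²(μ, ν) = W_2²(μ, ν)/d; explicitly, W_2²(μ,ν) = ‖m₁ − m₂‖² + d(s − r)² and SW_2²(μ,ν) = ‖m₁ − m₂‖²/d + (s − r)². -/

import Mathlib

open MeasureTheory ENNReal Metric Filter
open scoped RealInnerProductSpace NNReal

noncomputable section

/-- `ℝ^d` as a Euclidean space. -/
abbrev Ed (d : ℕ) : Type := EuclideanSpace ℝ (Fin d)

/-- `π` is a coupling of `μ` and `ν`. -/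
def IsCoupling {E : Type*} [MeasurableSpace E] (π : Measure (E × E)) (μ ν : Measure E) : Prop :=
  π.map Prod.fst = μ ∧ π.map Prod.snd = ν

/-- Squared 2-Wasserstein distance. -/
def W2sq {E : Type*} [MeasurableSpace E] [NormedAddCommGroup E] (μ ν : Measure E) : ℝ≥0∞ :=
  ⨅ (π : Measure (E × E)) (_ : IsCoupling π μ ν), ∫⁻ p, (‖p.1 - p.2‖₊ : ℝ≥0∞) ^ 2 ∂π

/-- The uniform probability measure on the unit sphere `S^{d-1}`. -/
def unifSphere (d : ℕ) : Measure (sphere (0 : Ed d) 1) :=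
  ((volume : Measure (Ed d)).toSphere Set.univ)⁻¹ • (volume : Measure (Ed d)).toSphere

/-- Projection `P^θ(x) = ⟨x, θ⟩`. -/
def proj {d : ℕ} (θ : Ed d) (x : Ed d) : ℝ := ⟪x, θ⟫

/-- Squared Sliced-Wasserstein distance. -/
def SW2sq {d : ℕ} (μ ν : Measure (Ed d)) : ℝ≥0∞ :=
  ∫⁻ θ : sphere (0 : Ed d) 1,
    W2sq (μ.map (proj (θ : Ed d))) (ν.map (proj (θ : Ed d))) ∂(unifSphere d)

/-- Sliced-Wasserstein distance. -/
def SW2 {d : ℕ} (μ ν : Measure (Ed d)) : ℝ := Real.sqrt (SW2sq μ ν).toReal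

/-- Finite second moment. -/
def FiniteSecondMoment {d : ℕ} (μ : Measure (Ed d)) : Prop :=
  ∫⁻ x, (‖x‖₊ : ℝ≥0∞) ^ 2 ∂μ < ∞

/-- `μ ∈ P_2(K)`: probability measure supported in `K` with finite second moment. -/
def MemP2 {d : ℕ} (K : Set (Ed d)) (μ : Measure (Ed d)) : Prop :=
  IsProbabilityMeasure μ ∧ μ Kᶜ = 0 ∧ FiniteSecondMoment μ

open ProbabilityTheory in
/-- The isotropic Gaussian measure N(m, s²I_d) on ℝ^d. -/
def isoGaussian (d : ℕ) (m : Ed d) (s : ℝ≥0) : Measure (Ed d) :=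
  (Measure.pi fun i : Fin d => gaussianReal (m i) (s ^ 2)).map
    (MeasurableEquiv.toLp 2 (Fin d → ℝ))

open ProbabilityTheory
open scoped Pointwise

lemma aux_affine (a c : ℝ) (v : ℝ≥0) (hv : (v : ℝ) = c ^ 2) :
    (gaussianReal 0 1).map (fun x => a + c * x) = gaussianReal a v := by
  have h : (fun x : ℝ => a + c * x) = (a + ·) ∘ (c * ·) := rfl
  rw [h, ← Measure.map_map (by fun_prop) (by fun_prop), gaussianReal_map_const_mul,
    gaussianReal_map_const_add]
  congr 1
  · ring
  · ext; simp [hv]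

lemma aux_nn (x : ℝ) : (‖x‖₊ : ℝ≥0∞) ^ 2 = ENNReal.ofReal (x ^ 2) := by
  rw [← sq_abs, ENNReal.ofReal_pow (abs_nonneg _), ← Real.norm_eq_abs, ofReal_norm]
  rfl

/-- Second moment of a square integrable variable. -/
lemma aux_secmom {Ω : Type*} [MeasurableSpace Ω] (P : Measure Ω) [IsProbabilityMeasure P]
    (X : Ω → ℝ) (hX : MemLp X 2 P) :
    ∫⁻ ω, (‖X ω‖₊ : ℝ≥0∞) ^ 2 ∂P = ENNReal.ofReal (Var[X; P] + (∫ ω, X ω ∂P) ^ 2) := by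
  simp_rw [aux_nn]
  rw [← ofReal_integral_eq_lintegral_ofReal hX.integrable_sq (ae_of_all _ fun _ => sq_nonneg _),
    variance_eq_sub hX]
  simp

lemma aux_gauss_secmom (a : ℝ) (v : ℝ≥0) :
    ∫⁻ x, (‖x‖₊ : ℝ≥0∞) ^ 2 ∂(gaussianReal a v) = ENNReal.ofReal (a ^ 2 + v) := by
  have := aux_secmom (gaussianReal a v) id (memLp_id_gaussianReal' 2 (by simp))
  rw [variance_id_gaussianReal] at this
  simpa [add_comm] using this

lemma aux_quad (a c : ℝ) :
    ∫⁻ x, (‖a + c * x‖₊ : ℝ≥0∞) ^ 2 ∂(gaussianReal 0 1) = ENNReal.ofReal (a ^ 2 + c ^ 2) := by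
  have h := aux_gauss_secmom a ⟨c ^ 2, sq_nonneg _⟩
  have h' := aux_affine a c ⟨c ^ 2, sq_nonneg _⟩ rfl
  rw [← h', lintegral_map (by fun_prop) (by fun_prop)] at h
  exact h

lemma aux_lower {Ω : Type*} [MeasurableSpace Ω] (P : Measure Ω)
    (X Y : Ω → ℝ) (hXm : Measurable X) (hYm : Measurable Y) (a b : ℝ) (s r : ℝ≥0)
    (hX : P.map X = gaussianReal a (s ^ 2)) (hY : P.map Y = gaussianReal b (r ^ 2)) :
    ENNReal.ofReal ((a - b) ^ 2 + ((s : ℝ) - r) ^ 2) ≤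
      ∫⁻ ω, (‖X ω - Y ω‖₊ : ℝ≥0∞) ^ 2 ∂P := by
  have hP : IsProbabilityMeasure P := by
    have : IsProbabilityMeasure (P.map X) := by rw [hX]; infer_instance
    exact Measure.isProbabilityMeasure_of_map X
  have lp : ∀ (Z : Ω → ℝ) (hZ : Measurable Z) (c : ℝ) (v : ℝ≥0),
      P.map Z = gaussianReal c v → MemLp Z 2 P ∧ ∫ ω, Z ω ∂P = c ∧ Var[Z; P] = v := by
    intro Z hZ c v h
    refine ⟨?_, ?_, ?_⟩
    · have := memLp_id_gaussianReal' (μ := c) (v := v) 2 (by simp)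
      rw [← h] at this
      exact (memLp_map_measure_iff (by fun_prop) hZ.aemeasurable).1 this
    · have := integral_id_gaussianReal (μ := c) (v := v)
      rwa [← h, integral_map hZ.aemeasurable (by fun_prop)] at this
    · have := variance_id_gaussianReal (μ := c) (v := v)
      rwa [← h, variance_id_map hZ.aemeasurable] at this
  obtain ⟨hX2, hXa, hXs⟩ := lp X hXm _ _ hX
  obtain ⟨hY2, hYb, hYr⟩ := lp Y hYm _ _ hY
  have key := aux_secmom P (fun ω => X ω - Y ω) (hX2.sub hY2)
  rw [key]
  apply ENNReal.ofReal_le_ofReal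
  rw [integral_sub (hX2.integrable (by norm_num)) (hY2.integrable (by norm_num)), hXa, hYb]
  rw [variance_fun_sub hX2 hY2, hXs, hYr]
  have hc : ∀ t : ℝ, 0 ≤ (s : ℝ) ^ 2 * (t * t) + (2 * cov[X, Y; P]) * t + (r : ℝ) ^ 2 := by
    intro t
    have h0 := variance_nonneg (fun ω => t * X ω + Y ω) P
    rw [variance_fun_add (hX2.const_mul t) hY2, variance_const_mul, covariance_const_mul_left,
      hXs, hYr] at h0
    push_cast at h0
    linarith
  have hd := discrim_le_zero hc
  rw [discrim] at hd
  have : cov[X, Y; P] ≤ s * r := by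
    apply abs_le_of_sq_le_sq' _ (by positivity) |>.2
    nlinarith
  push_cast
  nlinarith

lemma aux_W2_real (a b : ℝ) (s r : ℝ≥0) :
    W2sq (gaussianReal a (s ^ 2)) (gaussianReal b (r ^ 2)) =
      ENNReal.ofReal ((a - b) ^ 2 + ((s : ℝ) - r) ^ 2) := by
  apply le_antisymm
  · refine (iInf₂_le ((gaussianReal 0 1).map (fun x : ℝ => (a + s * x, b + r * x))) ?_).trans ?_
    · constructor
      · rw [Measure.map_map (by fun_prop) (by fun_prop)]
        exact aux_affine a s _ (by simp)
      · rw [Measure.map_map (by fun_prop) (by fun_prop)]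
        exact aux_affine b r _ (by simp)
    · rw [lintegral_map (by fun_prop) (by fun_prop), ← aux_quad]
      apply le_of_eq
      congr! 4
      ring_nf
  · refine le_iInf₂ fun π hπ => ?_
    exact aux_lower π Prod.fst Prod.snd measurable_fst measurable_snd a b s r hπ.1 hπ.2

lemma aux_std_proj {d : ℕ} (θ : Ed d) (hθ : ‖θ‖ = 1) :
    (stdGaussian (Ed d)).map (proj θ) = gaussianReal 0 1 := by
  have h : proj θ = (innerSL ℝ θ : Ed d →L[ℝ] ℝ) := by
    ext x; simp [proj, real_inner_comm]
  rw [h, IsGaussian.map_eq_gaussianReal, integral_strongDual_stdGaussian,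
    variance_dual_stdGaussian]
  simp [hθ]

lemma aux_iso (d : ℕ) (m : Ed d) (s : ℝ≥0) :
    isoGaussian d m s = (stdGaussian (Ed d)).map (fun x => m + (s : ℝ) • x) := by
  have h : (fun i : Fin d => gaussianReal (m i) (s ^ 2)) =
      fun i => (gaussianReal 0 1).map (fun x => m i + s * x) := by
    ext1 i; rw [aux_affine (m i) s (s ^ 2) (by simp)]
  rw [isoGaussian, h, ← map_pi_eq_stdGaussian, ← Measure.pi_map_pi (by fun_prop),
    Measure.map_map (by fun_prop) (by fun_prop), Measure.map_map (by fun_prop) (by fun_prop)]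
  rfl

lemma aux_iso_proj {d : ℕ} (m : Ed d) (s : ℝ≥0) (θ : Ed d) (hθ : ‖θ‖ = 1) :
    (isoGaussian d m s).map (proj θ) = gaussianReal (proj θ m) (s ^ 2) := by
  have hm : Measurable (proj θ) := by unfold proj; fun_prop
  rw [← aux_affine (proj θ m) s (s ^ 2) (by simp), ← aux_std_proj θ hθ, aux_iso,
    Measure.map_map hm (by fun_prop), Measure.map_map (by fun_prop) hm]
  congr 1
  ext x
  simp [proj, inner_add_left, inner_smul_left]

lemma aux_coord {d : ℕ} (i : Fin d) :
    proj (EuclideanSpace.single i (1 : ℝ)) = fun x : Ed d => x i := by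
  ext x; simp [proj, EuclideanSpace.inner_single_right]

lemma aux_norm {d : ℕ} (x : Ed d) :
    (‖x‖₊ : ℝ≥0∞) ^ 2 = ∑ i, (‖x i‖₊ : ℝ≥0∞) ^ 2 := by
  have h : ‖x‖₊ ^ 2 = ∑ i, ‖x i‖₊ ^ 2 := by
    ext
    push_cast
    exact EuclideanSpace.norm_sq_eq x
  exact_mod_cast congrArg (fun z : ℝ≥0 => (z : ℝ≥0∞)) h

lemma aux_sum {d : ℕ} (m : Ed d) (c : ℝ) :
    ENNReal.ofReal (‖m‖ ^ 2 + d * c ^ 2) = ∑ i, ENNReal.ofReal ((m i) ^ 2 + c ^ 2) := by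
  rw [← ENNReal.ofReal_sum_of_nonneg (fun i _ => by positivity), Finset.sum_add_distrib,
    EuclideanSpace.norm_sq_eq]
  simp

lemma aux_W2 (d : ℕ) (m₁ m₂ : Ed d) (s r : ℝ≥0) :
    W2sq (isoGaussian d m₁ s) (isoGaussian d m₂ r)
        = ENNReal.ofReal (‖m₁ - m₂‖ ^ 2 + d * ((s : ℝ) - (r : ℝ)) ^ 2) := by
  rw [aux_sum]
  apply le_antisymm
  · refine (iInf₂_le ((stdGaussian (Ed d)).map
      (fun x => (m₁ + (s : ℝ) • x, m₂ + (r : ℝ) • x))) ?_).trans ?_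
    · constructor
      · rw [Measure.map_map (by fun_prop) (by fun_prop), aux_iso]; rfl
      · rw [Measure.map_map (by fun_prop) (by fun_prop), aux_iso]; rfl
    · rw [lintegral_map (by fun_prop) (by fun_prop)]
      simp_rw [aux_norm]
      rw [lintegral_finsetSum _ (by fun_prop)]
      apply le_of_eq
      refine Finset.sum_congr rfl fun i _ => ?_
      rw [← aux_quad, ← aux_std_proj (EuclideanSpace.single i (1 : ℝ)) (by simp), aux_coord,
        lintegral_map (by fun_prop) (by fun_prop)]
      congr! 4
      simp
      ring_nf
  · refine le_iInf₂ fun π hπ => ?_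
    simp_rw [aux_norm]
    rw [lintegral_finsetSum _ (by fun_prop)]
    refine Finset.sum_le_sum fun i _ => ?_
    have marg : ∀ (m : Ed d) (t : ℝ≥0), (isoGaussian d m t).map (fun x : Ed d => x i) =
        gaussianReal (m i) (t ^ 2) := by
      intro m t
      have := aux_iso_proj m t (EuclideanSpace.single i (1 : ℝ)) (by simp)
      rwa [aux_coord] at this
    refine aux_lower π (fun p => p.1 i) (fun p => p.2 i) (by fun_prop) (by fun_prop)
      (m₁ i) (m₂ i) s r ?_ ?_
    · rw [← marg, ← hπ.1, Measure.map_map (by fun_prop) (by fun_prop)]; rfl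
    · rw [← marg, ← hπ.2, Measure.map_map (by fun_prop) (by fun_prop)]; rfl

/-- Invariance of the surface measure under linear isometries. -/
lemma aux_inv {d : ℕ} (R : Ed d ≃ₗᵢ[ℝ] Ed d) (f : Ed d → ℝ≥0∞) (hf : Measurable f) :
    ∫⁻ θ : sphere (0 : Ed d) 1, f (R θ) ∂(volume : Measure (Ed d)).toSphere =
      ∫⁻ θ : sphere (0 : Ed d) 1, f θ ∂(volume : Measure (Ed d)).toSphere := by
  let T : sphere (0 : Ed d) 1 → sphere (0 : Ed d) 1 := fun θ => ⟨R θ, by simp⟩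
  have hT : Measurable T := by
    apply Measurable.subtype_mk
    exact R.continuous.measurable.comp measurable_subtype_coe
  have hmap : (volume : Measure (Ed d)).toSphere.map T = (volume : Measure (Ed d)).toSphere := by
    ext A hA
    rw [Measure.map_apply hT hA, Measure.toSphere_apply' _ (hT hA), Measure.toSphere_apply' _ hA]
    congr 1
    have hset : Set.Ioo (0 : ℝ) 1 • Set.image (fun y : sphere (0 : Ed d) 1 => (y : Ed d)) (Set.preimage T A) =
        Set.preimage R (Set.Ioo (0 : ℝ) 1 • Set.image (fun y : sphere (0 : Ed d) 1 => (y : Ed d)) A) := by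
      ext x
      simp only [Set.mem_smul, Set.mem_preimage, Set.mem_image]
      constructor
      · rintro ⟨t, ht, _, ⟨y, hy, rfl⟩, rfl⟩
        exact ⟨t, ht, _, ⟨T y, hy, rfl⟩, by simp [T]⟩
      · rintro ⟨t, ht, _, ⟨y, hy, rfl⟩, h⟩
        refine ⟨t, ht, R.symm y, ⟨⟨R.symm y, by simp⟩, ?_, rfl⟩, ?_⟩
        · simpa [T] using hy
        · apply R.injective
          simpa using h
    rw [hset]
    exact R.measurePreserving.measure_preimage_emb R.toHomeomorph.measurableEmbedding _
  conv_rhs => rw [← hmap]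
  rw [lintegral_map (by fun_prop) hT]

lemma aux_G {d : ℕ} (v w : Ed d) (h : ‖v‖ = ‖w‖) :
    ∫⁻ θ : sphere (0 : Ed d) 1, ENNReal.ofReal (⟪v, (θ : Ed d)⟫ ^ 2)
      ∂(volume : Measure (Ed d)).toSphere =
    ∫⁻ θ : sphere (0 : Ed d) 1, ENNReal.ofReal (⟪w, (θ : Ed d)⟫ ^ 2)
      ∂(volume : Measure (Ed d)).toSphere := by
  have hR := Submodule.reflection_sub h
  rw [← aux_inv (Submodule.reflection (ℝ ∙ (v - w))ᗮ)
    (fun x => ENNReal.ofReal (⟪w, x⟫ ^ 2)) (by fun_prop)]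
  congr! 4 with θ
  have h3 := LinearIsometryEquiv.inner_map_map (Submodule.reflection (ℝ ∙ (v - w))ᗮ) v (θ : Ed d)
  rw [hR] at h3
  exact h3.symm

lemma aux_avg {d : ℕ} (v : Ed d) :
    d * ∫⁻ θ : sphere (0 : Ed d) 1, ENNReal.ofReal (⟪v, (θ : Ed d)⟫ ^ 2)
      ∂(volume : Measure (Ed d)).toSphere =
    ENNReal.ofReal (‖v‖ ^ 2) * (volume : Measure (Ed d)).toSphere Set.univ := by
  have h1 : ∀ i : Fin d, _ := fun i =>
    aux_G v (EuclideanSpace.single i ‖v‖) (by simp)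
  have h2 : (d : ℝ≥0∞) * ∫⁻ θ : sphere (0 : Ed d) 1, ENNReal.ofReal (⟪v, (θ : Ed d)⟫ ^ 2)
      ∂(volume : Measure (Ed d)).toSphere = ∑ i : Fin d,
      ∫⁻ θ : sphere (0 : Ed d) 1, ENNReal.ofReal (⟪v, (θ : Ed d)⟫ ^ 2)
      ∂(volume : Measure (Ed d)).toSphere := by simp
  rw [h2, Finset.sum_congr rfl fun i _ => h1 i, ← lintegral_finsetSum _ (by fun_prop),
    ← lintegral_const]
  congr! 2 with θ
  rw [← ENNReal.ofReal_sum_of_nonneg (fun i _ => by positivity)]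
  congr 1
  have : ‖(θ : Ed d)‖ ^ 2 = 1 := by simp
  rw [EuclideanSpace.norm_sq_eq] at this
  simp only [Real.norm_eq_abs, sq_abs] at this
  simp [EuclideanSpace.inner_single_left, mul_pow, ← Finset.mul_sum, this]

lemma aux_SW (d : ℕ) (hd : 0 < d) (m₁ m₂ : Ed d) (s r : ℝ≥0) :
    SW2sq (isoGaussian d m₁ s) (isoGaussian d m₂ r)
        = ENNReal.ofReal (‖m₁ - m₂‖ ^ 2 / d + ((s : ℝ) - (r : ℝ)) ^ 2) := by
  have : Nonempty (Fin d) := ⟨⟨0, hd⟩⟩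
  have hd' : (0 : ℝ) < d := by exact_mod_cast hd
  set σ := (volume : Measure (Ed d)).toSphere with hσ
  have hσ0 : σ Set.univ ≠ 0 := by
    simp only [hσ, ne_eq, Measure.measure_univ_eq_zero]
    have : Nontrivial (Ed d) := inferInstance
    exact Measure.toSphere_ne_zero _
  have hσt : σ Set.univ ≠ ∞ := measure_ne_top _ _
  have h1 : ∀ θ : sphere (0 : Ed d) 1,
      W2sq ((isoGaussian d m₁ s).map (proj (θ : Ed d))) ((isoGaussian d m₂ r).map (proj (θ : Ed d)))
      = ENNReal.ofReal (⟪m₁ - m₂, (θ : Ed d)⟫ ^ 2) + ENNReal.ofReal (((s : ℝ) - r) ^ 2) := by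
    intro θ
    rw [aux_iso_proj _ _ _ (by simp), aux_iso_proj _ _ _ (by simp), aux_W2_real,
      ENNReal.ofReal_add (by positivity) (by positivity)]
    simp [proj, inner_sub_left]
  have h2 := aux_avg (m₁ - m₂)
  unfold SW2sq unifSphere
  simp_rw [h1]
  rw [lintegral_smul_measure, lintegral_add_right _ (by fun_prop), lintegral_const, ← hσ,
    ENNReal.ofReal_add (by positivity) (by positivity), smul_eq_mul, mul_add]
  rw [← hσ] at h2
  congr 1
  · have hdn : (d : ℝ≥0∞) ≠ 0 := by exact_mod_cast hd.ne'
    rw [ENNReal.ofReal_div_of_pos hd', ENNReal.ofReal_natCast,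
      ENNReal.eq_div_iff hdn (by simp), mul_left_comm, h2, mul_left_comm,
      ENNReal.inv_mul_cancel hσ0 hσt, mul_one]
  · rw [mul_left_comm, ENNReal.inv_mul_cancel hσ0 hσt, mul_one]

/-- For isotropic Gaussians μ = N(m₁, s²I_d) and ν = N(m₂, r²I_d),
W_2²(μ,ν) = ‖m₁ − m₂‖² + d(s − r)², SW_2²(μ,ν) = ‖m₁ − m₂‖²/d + (s − r)², and in particular
SW_2²(μ, ν) = W_2²(μ, ν)/d. -/
theorem sw2sq_isoGaussian (d : ℕ) (hd : 0 < d) (m₁ m₂ : Ed d) (s r : ℝ≥0) :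
    W2sq (isoGaussian d m₁ s) (isoGaussian d m₂ r)
        = ENNReal.ofReal (‖m₁ - m₂‖ ^ 2 + d * ((s : ℝ) - (r : ℝ)) ^ 2) ∧
    SW2sq (isoGaussian d m₁ s) (isoGaussian d m₂ r)
        = ENNReal.ofReal (‖m₁ - m₂‖ ^ 2 / d + ((s : ℝ) - (r : ℝ)) ^ 2) ∧
    SW2sq (isoGaussian d m₁ s) (isoGaussian d m₂ r)
        = W2sq (isoGaussian d m₁ s) (isoGaussian d m₂ r) / d := by
  refine ⟨aux_W2 d m₁ m₂ s r, aux_SW d hd m₁ m₂ s r, ?_⟩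
  have hd' : (0 : ℝ) < d := by exact_mod_cast hd
  rw [aux_W2, aux_SW d hd, ← ENNReal.ofReal_natCast d, ← ENNReal.ofReal_div_of_pos hd']
  congr 1
  field_simp
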